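/- arXiv:math/0609038 — 11 statements merged into one kernel-verified Lean document; each statement's English description precedes it below -/
import Mathlib

section
/- Let Q be a real n×N matrix with Q Qᵀ = Iₙ, let Λ be a positive definite diagonal N×N real matrix, and let U be a skew-symmetric N×N real matrix. If J_Q(U) := Qᵀ Q U Λ + Λ U Qᵀ Q = 0, then Q U = 0. -/
/-!
Put `A = Q U`. By cyclicity of the trace and `U Qᵀ = -Aᵀ` (skew-symmetry of `U`), both summands of
`tr (Uᵀ J_Q(U))` equal `tr (A Λ Aᵀ)`, so `J_Q(U) = 0` makes this trace vanish. It is the sum of the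
values of the positive definite form `Λ` on the rows of `A`, hence every row of `A` is zero.
-/

open Matrix

/-- For `Q` on the Stiefel manifold (`Q Qᵀ = 1`), `Λ` positive definite diagonal, and `U`
skew-symmetric: if `J_Q(U) = Qᵀ Q U Λ + Λ U Qᵀ Q = 0`, then `Q U = 0`. -/
theorem stmt3 (n N : ℕ) (Q : Matrix (Fin n) (Fin N) ℝ)
    (Λ U : Matrix (Fin N) (Fin N) ℝ)
    (hQ : Q * Qᵀ = 1) (hΛ : Λ.PosDef) (hΛdiag : Λ.IsDiag) (hU : Uᵀ = -U)
    (h : Qᵀ * Q * U * Λ + Λ * U * (Qᵀ * Q) = 0) :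
    Q * U = 0 := by
  have h1 : (Uᵀ * (Qᵀ * Q * U * Λ)).trace = (Q * U * Λ * (Q * U)ᵀ).trace := by
    rw [trace_mul_comm (Q * U * Λ), transpose_mul]
    simp only [Matrix.mul_assoc]
  have h2 : (Uᵀ * (Λ * U * (Qᵀ * Q))).trace = (Q * U * Λ * (Q * U)ᵀ).trace := by
    have : Uᵀ * (Λ * U * (Qᵀ * Q)) = (Uᵀ * Λ * U * Qᵀ) * Q := by
      simp only [Matrix.mul_assoc]
    rw [this, trace_mul_comm, transpose_mul, hU]
    simp only [Matrix.mul_assoc, Matrix.neg_mul, Matrix.mul_neg]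
  have h0 : (Q * U * Λ * (Q * U)ᵀ).trace = 0 := by
    have h3 := congrArg (fun M => (Uᵀ * M).trace) h
    simp only [Matrix.mul_add, trace_add, h1, h2, Matrix.mul_zero, trace_zero] at h3
    linarith
  have hrow : ∀ i, 0 ≤ (Q * U) i ⬝ᵥ (Λ *ᵥ (Q * U) i) := fun i => by
    simpa using hΛ.posSemidef.dotProduct_mulVec_nonneg ((Q * U) i)
  have hdiag : ∀ i, (Q * U * Λ * (Q * U)ᵀ) i i = (Q * U) i ⬝ᵥ (Λ *ᵥ (Q * U) i) := fun i => by
    rw [Matrix.mul_assoc (Q * U)]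
    rfl
  simp only [trace, diag_apply, hdiag] at h0
  rw [Finset.sum_eq_zero_iff_of_nonneg fun i _ => hrow i] at h0
  funext i
  by_contra hi
  have := hΛ.dotProduct_mulVec_pos hi
  simp only [star_trivial] at this
  exact this.ne' (h0 i (Finset.mem_univ i))
end

section
/- Let Q ∈ V(n,N), let Λ be a positive definite diagonal N×N real matrix, let S be a real n×N matrix, and set M = Qᵀ S − Sᵀ Q. Define U₁ = Λ⁻¹ ( Qᵀ (Q Λ⁻¹ Qᵀ)⁻¹ S − Sᵀ (Q Λ⁻¹ Qᵀ)⁻¹ Q ) Λ⁻¹ and R = (Q Λ⁻¹ Sᵀ)(Q Λ⁻¹ Qᵀ)⁻¹ − (Q Λ⁻¹ Qᵀ)⁻¹ (S Λ⁻¹ Qᵀ). Then R is skew-symmetric, there exists a unique skew-symmetric n×n matrix X with Ĵ_Q(X) := (Q Λ⁻¹ Qᵀ) X + X (Q Λ⁻¹ Qᵀ) = R, and with U₂ = Λ⁻¹ Qᵀ X Q Λ⁻¹ the following holds: a skew-symmetric N×N matrix U satisfies J_Q(U) := Qᵀ Q U Λ + Λ U Qᵀ Q = M if and only if U = U₁ +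 U₂ + V for some skew-symmetric N×N matrix V with Q V = 0. -/
open Matrix

/-!
Write `A = Q Λ⁻¹ Qᵀ`, which is positive definite. The Sylvester operator `X ↦ A X + X A` is
injective: if `A X + X A = 0`, then `tr (Xᵀ A X) + tr (X A Xᵀ) = 0` is a sum of two nonnegative
numbers, so `Xᵀ A X = 0` and `X = 0` (`sylvester_injective`). In finite dimension it is therefore
bijective, and since it commutes with `X ↦ -Xᵀ`, the preimage of a skew-symmetric matrix is
skew-symmetric (`sylvester_existsUnique`).

A direct computation gives `J_Q(U₁) = M - Qᵀ R Q` and `J_Q(U₂) = Qᵀ R Q`, so `U₁ + U₂` is a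
particular solution, and it remains to identify the kernel of `J_Q` on skew-symmetric matrices
with `{V | Q V = 0}`. If `J_Q(V) = 0`, multiplying by `Q Λ⁻¹` on the left gives
`A (Q V) Λ = -C Q` with `C = Q V Qᵀ`; multiplying this by `Λ⁻¹ Qᵀ` on the right gives
`A C + C A = 0`, whence `C = 0`, and then `A (Q V) Λ = 0` forces `Q V = 0`
(`mul_eq_zero_of_momentum_eq_zero`).
-/

theorem sylvester_injective {n : ℕ} {A X : Matrix (Fin n) (Fin n) ℝ} (hA : A.PosDef)
    (h : A * X + X * A = 0) : X = 0 := by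
  have h1 : (Xᵀ * A * X).PosSemidef := by
    simpa using hA.posSemidef.conjTranspose_mul_mul_same X
  have h2 : (X * A * Xᵀ).PosSemidef := by
    simpa using hA.posSemidef.mul_mul_conjTranspose_same X
  have ht : (Xᵀ * A * X).trace + (X * A * Xᵀ).trace = 0 := by
    rw [Matrix.trace_mul_comm (X * A) Xᵀ, ← Matrix.trace_add, Matrix.mul_assoc, ← Matrix.mul_add,
      h, Matrix.mul_zero, Matrix.trace_zero]
  have h0 : Xᵀ * A * X = 0 := by
    rw [← h1.trace_eq_zero_iff]
    linarith [h1.trace_nonneg, h2.trace_nonneg]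
  rw [← Matrix.mulVec_injective.eq_iff]
  funext v
  rw [Matrix.zero_mulVec]
  by_contra hv
  have hpos := hA.dotProduct_mulVec_pos hv
  have hz : star (X *ᵥ v) ⬝ᵥ A *ᵥ (X *ᵥ v) = v ⬝ᵥ ((Xᵀ * A * X) *ᵥ v) := by
    rw [star_trivial, ← Matrix.mulVec_mulVec, ← Matrix.mulVec_mulVec, Matrix.dotProduct_mulVec v,
      Matrix.vecMul_transpose]
  rw [hz, h0] at hpos
  simp at hpos

theorem sylvester_existsUnique {n : ℕ} {A R : Matrix (Fin n) (Fin n) ℝ} (hA : A.PosDef)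
    (hR : Rᵀ = -R) :
    ∃! X : Matrix (Fin n) (Fin n) ℝ, Xᵀ = -X ∧ A * X + X * A = R := by
  let f : Matrix (Fin n) (Fin n) ℝ →ₗ[ℝ] Matrix (Fin n) (Fin n) ℝ :=
    LinearMap.mulLeft ℝ A + LinearMap.mulRight ℝ A
  have hf : Function.Injective f := by
    rw [injective_iff_map_eq_zero]
    exact fun X hX => sylvester_injective hA hX
  have hAt : Aᵀ = A := by simpa using hA.isHermitian.eq
  obtain ⟨X, hX⟩ := LinearMap.injective_iff_surjective.mp hf R
  replace hX : A * X + X * A = R := hX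
  refine ⟨X, ⟨?_, hX⟩, fun Y hY => hf (hY.2.trans hX.symm)⟩
  apply hf
  change A * Xᵀ + Xᵀ * A = A * -X + -X * A
  have := congrArg Matrix.transpose hX
  rw [Matrix.transpose_add, Matrix.transpose_mul, Matrix.transpose_mul, hAt, hR, ← hX] at this
  rw [add_comm, this, Matrix.mul_neg, Matrix.neg_mul, neg_add]

/-- The kernel of `J_Q` on skew-symmetric matrices lies in `{V | Q V = 0}`; here `P` plays the
role of `Λ⁻¹`. -/
theorem mul_eq_zero_of_momentum_eq_zero {n N : ℕ} {Q : Matrix (Fin n) (Fin N) ℝ}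
    {L P V : Matrix (Fin N) (Fin N) ℝ} (hPL : P * L = 1) (hLP : L * P = 1)
    (hA : (Q * P * Qᵀ).PosDef) (h : Qᵀ * Q * V * L + L * V * (Qᵀ * Q) = 0) : Q * V = 0 := by
  have h1 : (Q * P * Qᵀ) * (Q * V) * L + (Q * V * Qᵀ) * Q = 0 := by
    have := congrArg (fun Z => Q * P * Z) h
    simp only [Matrix.mul_add, Matrix.mul_zero] at this
    rw [← this]
    simp only [Matrix.mul_assoc]
    rw [← Matrix.mul_assoc P L, hPL, Matrix.one_mul]
  have h2 : (Q * P * Qᵀ) * (Q * V * Qᵀ) + (Q * V * Qᵀ) * (Q * P * Qᵀ) = 0 := by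
    have := congrArg (fun Z => Z * (P * Qᵀ)) h1
    simp only [Matrix.add_mul, Matrix.zero_mul] at this
    rw [← this]
    simp only [Matrix.mul_assoc]
    rw [← Matrix.mul_assoc L P, hLP, Matrix.one_mul]
  rw [sylvester_injective hA h2, Matrix.zero_mul, add_zero] at h1
  have hu : IsUnit (Q * P * Qᵀ).det := (Matrix.isUnit_iff_isUnit_det _).mp hA.isUnit
  calc Q * V = (Q * P * Qᵀ)⁻¹ * ((Q * P * Qᵀ) * (Q * V) * L) * P := by
        rw [Matrix.mul_assoc _ (Q * V), Matrix.nonsing_inv_mul_cancel_left _ _ hu,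
          Matrix.mul_assoc, hLP, Matrix.mul_one]
    _ = 0 := by rw [h1, Matrix.mul_zero, Matrix.zero_mul]

theorem stmt4 (n N : ℕ) (Q S : Matrix (Fin n) (Fin N) ℝ)
    (Λ : Matrix (Fin N) (Fin N) ℝ)
    (hQ : Q * Qᵀ = 1) (hΛ : Λ.PosDef) (hΛdiag : Λ.IsDiag)
    (M : Matrix (Fin N) (Fin N) ℝ) (hM : M = Qᵀ * S - Sᵀ * Q)
    (U₁ : Matrix (Fin N) (Fin N) ℝ)
    (hU₁ : U₁ = Λ⁻¹ * (Qᵀ * (Q * Λ⁻¹ * Qᵀ)⁻¹ * S - Sᵀ * (Q * Λ⁻¹ * Qᵀ)⁻¹ * Q) * Λ⁻¹)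
    (R : Matrix (Fin n) (Fin n) ℝ)
    (hR : R = (Q * Λ⁻¹ * Sᵀ) * (Q * Λ⁻¹ * Qᵀ)⁻¹ - (Q * Λ⁻¹ * Qᵀ)⁻¹ * (S * Λ⁻¹ * Qᵀ)) :
    Rᵀ = -R ∧
    (∃! X : Matrix (Fin n) (Fin n) ℝ,
      Xᵀ = -X ∧ (Q * Λ⁻¹ * Qᵀ) * X + X * (Q * Λ⁻¹ * Qᵀ) = R) ∧
    (∀ X : Matrix (Fin n) (Fin n) ℝ,
      Xᵀ = -X → (Q * Λ⁻¹ * Qᵀ) * X + X * (Q * Λ⁻¹ * Qᵀ) = R →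
      ∀ U : Matrix (Fin N) (Fin N) ℝ, Uᵀ = -U →
        (Qᵀ * Q * U * Λ + Λ * U * (Qᵀ * Q) = M ↔
          ∃ V : Matrix (Fin N) (Fin N) ℝ, Vᵀ = -V ∧ Q * V = 0 ∧
            U = U₁ + Λ⁻¹ * (Qᵀ * X * Q) * Λ⁻¹ + V)) := by
  have huΛ : IsUnit Λ.det := (Matrix.isUnit_iff_isUnit_det _).mp hΛ.isUnit
  have hPL : Λ⁻¹ * Λ = 1 := Matrix.nonsing_inv_mul _ huΛ
  have hLP : Λ * Λ⁻¹ = 1 := Matrix.mul_nonsing_inv _ huΛ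
  have hP : (Λ⁻¹).PosDef := hΛ.inv
  generalize Λ⁻¹ = P at *
  have hPt : Pᵀ = P := by simpa using hP.isHermitian.eq
  have hA : (Q * P * Qᵀ).PosDef := by
    have hinj : Function.Injective Q.vecMul := by
      intro x y hxy
      have := congrArg (fun z => z ᵥ* Qᵀ) hxy
      simpa [Matrix.vecMul_vecMul, hQ] using this
    simpa using hP.mul_mul_conjTranspose_same hinj
  have hu : IsUnit (Q * P * Qᵀ).det := (Matrix.isUnit_iff_isUnit_det _).mp hA.isUnit
  have hker := fun V => mul_eq_zero_of_momentum_eq_zero (V := V) hPL hLP hA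
  have hAB : (Q * P * Qᵀ) * (Q * P * Qᵀ)⁻¹ = 1 := Matrix.mul_nonsing_inv _ hu
  have hBA : (Q * P * Qᵀ)⁻¹ * (Q * P * Qᵀ) = 1 := Matrix.nonsing_inv_mul _ hu
  have hBt : ((Q * P * Qᵀ)⁻¹)ᵀ = (Q * P * Qᵀ)⁻¹ := by simpa using hA.inv.isHermitian.eq
  have hsyl := fun hR => sylvester_existsUnique (R := R) hA hR
  generalize (Q * P * Qᵀ)⁻¹ = B at *
  have hRt : Rᵀ = -R := by
    rw [hR]
    simp [Matrix.transpose_mul, hBt, hPt, Matrix.mul_assoc]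
  refine ⟨hRt, hsyl hRt, fun X hXt hX U hUt => ?_⟩
  have hU₁t : U₁ᵀ = -U₁ := by
    rw [hU₁]
    simp [Matrix.transpose_mul, hBt, hPt, Matrix.mul_assoc, Matrix.mul_sub, Matrix.sub_mul]
  have hU₂t : (P * (Qᵀ * X * Q) * P)ᵀ = -(P * (Qᵀ * X * Q) * P) := by
    simp [Matrix.transpose_mul, hXt, hPt, Matrix.mul_assoc]
  have hJ₁ : Qᵀ * Q * U₁ * Λ + Λ * U₁ * (Qᵀ * Q) = M - Qᵀ * R * Q := by
    have e1 : Qᵀ * Q * U₁ * Λ = Qᵀ * S - Qᵀ * (Q * P * Sᵀ * B) * Q := by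
      calc Qᵀ * Q * U₁ * Λ
          = Qᵀ * ((Q * P * Qᵀ) * B) * S * (P * Λ) - Qᵀ * (Q * P * Sᵀ * B) * Q * (P * Λ) := by
            rw [hU₁]
            simp only [Matrix.mul_sub, Matrix.sub_mul, Matrix.mul_assoc]
        _ = _ := by rw [hAB, hPL]; simp only [Matrix.mul_one]
    have e2 : Λ * U₁ * (Qᵀ * Q) = Qᵀ * (B * (S * P * Qᵀ)) * Q - Sᵀ * Q := by
      calc Λ * U₁ * (Qᵀ * Q)
          = (Λ * P) * (Qᵀ * (B * (S * P * Qᵀ)) * Q) - (Λ * P) * (Sᵀ * (B * (Q * P * Qᵀ)) * Q) := by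
            rw [hU₁]
            simp only [Matrix.mul_sub, Matrix.sub_mul, Matrix.mul_assoc]
        _ = _ := by rw [hBA, hLP]; simp only [Matrix.mul_one, Matrix.one_mul]
    rw [e1, e2, hM, hR, Matrix.mul_sub, Matrix.sub_mul]
    abel
  have hJ₂ : Qᵀ * Q * (P * (Qᵀ * X * Q) * P) * Λ + Λ * (P * (Qᵀ * X * Q) * P) * (Qᵀ * Q)
      = Qᵀ * R * Q := by
    calc _ = Qᵀ * ((Q * P * Qᵀ) * X) * Q * (P * Λ)
          + (Λ * P) * (Qᵀ * (X * (Q * P * Qᵀ)) * Q) := by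
          simp only [Matrix.mul_assoc]
      _ = _ := by rw [hPL, hLP, Matrix.mul_one, Matrix.one_mul, ← hX, Matrix.mul_add, Matrix.add_mul]
  generalize P * (Qᵀ * X * Q) * P = U₂ at *
  constructor
  · intro hU
    refine ⟨U - U₁ - U₂, ?_, hker _ ?_, by abel⟩
    · rw [Matrix.transpose_sub, Matrix.transpose_sub, hUt, hU₁t, hU₂t]
      abel
    · have : Qᵀ * Q * (U - U₁ - U₂) * Λ + Λ * (U - U₁ - U₂) * (Qᵀ * Q)
          = (Qᵀ * Q * U * Λ + Λ * U * (Qᵀ * Q)) - (Qᵀ * Q * U₁ * Λ + Λ * U₁ * (Qᵀ * Q))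
            - (Qᵀ * Q * U₂ * Λ + Λ * U₂ * (Qᵀ * Q)) := by
        simp only [Matrix.mul_sub, Matrix.sub_mul]
        abel
      rw [this, hU, hJ₁, hJ₂]
      abel
  · rintro ⟨V, hVt, hQV, rfl⟩
    have hVQ : V * Qᵀ = 0 := by
      have := congrArg Matrix.transpose hQV
      simpa [Matrix.transpose_mul, hVt] using this
    have : Qᵀ * Q * (U₁ + U₂ + V) * Λ + Λ * (U₁ + U₂ + V) * (Qᵀ * Q)
        = (Qᵀ * Q * U₁ * Λ + Λ * U₁ * (Qᵀ * Q)) + (Qᵀ * Q * U₂ * Λ + Λ * U₂ * (Qᵀ * Q))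
          + (Qᵀ * (Q * V) * Λ + Λ * (V * Qᵀ) * Q) := by
      simp only [Matrix.mul_add, Matrix.add_mul, Matrix.mul_assoc]
      abel
    rw [this, hJ₁, hJ₂, hQV, hVQ]
    simp
end

section
/- Let Q ∈ V(n,N), let Λ be a positive definite diagonal N×N real matrix, and let S be a real n×N matrix such that Q Λ⁻¹ Sᵀ is skew-symmetric. Define U₁ = Λ⁻¹ ( Qᵀ (Q Λ⁻¹ Qᵀ)⁻¹ S − Sᵀ (Q Λ⁻¹ Qᵀ)⁻¹ Q ) Λ⁻¹ and U₂ = Λ⁻¹ ( Qᵀ (Q Λ⁻¹ Qᵀ)⁻¹ Q Λ⁻¹ Sᵀ (Q Λ⁻¹ Qᵀ)⁻¹ Q ) Λ⁻¹. Then Q U₁ = ( S − Q Λ⁻¹ Sᵀ (Q Λ⁻¹ Qᵀ)⁻¹ Q ) Λ⁻¹, Q U₂ = ( Q Λ⁻¹ Sᵀ (Q Λ⁻¹ Qᵀ)⁻¹ Q ) Λ⁻¹, and hence Q (U₁ + U₂) Λ = S. -/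
/-!
Multiplying `U₁` and `U₂` on the left by `Q` makes the product `Q Λ⁻¹ Qᵀ` appear in front of
`(Q Λ⁻¹ Qᵀ)⁻¹`. Since `Q` has full row rank (`Q Qᵀ = 1`) and `Λ⁻¹` is positive definite,
`Q Λ⁻¹ Qᵀ` is positive definite, hence invertible, and the two factors cancel. Adding the two
resulting formulas, the terms involving `Sᵀ` cancel and `S Λ⁻¹` remains.
-/

open Matrix

/-- For `Q` on the Stiefel manifold, `Λ` positive definite diagonal, and `S` with
`Q Λ⁻¹ Sᵀ` skew-symmetric, with
`U₁ = Λ⁻¹ (Qᵀ (Q Λ⁻¹ Qᵀ)⁻¹ S − Sᵀ (Q Λ⁻¹ Qᵀ)⁻¹ Q) Λ⁻¹` and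
`U₂ = Λ⁻¹ (Qᵀ (Q Λ⁻¹ Qᵀ)⁻¹ Q Λ⁻¹ Sᵀ (Q Λ⁻¹ Qᵀ)⁻¹ Q) Λ⁻¹`, one has
`Q U₁ = (S − Q Λ⁻¹ Sᵀ (Q Λ⁻¹ Qᵀ)⁻¹ Q) Λ⁻¹`, `Q U₂ = (Q Λ⁻¹ Sᵀ (Q Λ⁻¹ Qᵀ)⁻¹ Q) Λ⁻¹`,
and hence `Q (U₁ + U₂) Λ = S`. -/
theorem stmt6 (n N : ℕ) (Q S : Matrix (Fin n) (Fin N) ℝ)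
    (Λ : Matrix (Fin N) (Fin N) ℝ)
    (hQ : Q * Qᵀ = 1) (hΛ : Λ.PosDef) (hΛdiag : Λ.IsDiag)
    (hS : (Q * Λ⁻¹ * Sᵀ)ᵀ = -(Q * Λ⁻¹ * Sᵀ))
    (U₁ U₂ : Matrix (Fin N) (Fin N) ℝ)
    (hU₁ : U₁ = Λ⁻¹ * (Qᵀ * (Q * Λ⁻¹ * Qᵀ)⁻¹ * S - Sᵀ * (Q * Λ⁻¹ * Qᵀ)⁻¹ * Q) * Λ⁻¹)
    (hU₂ : U₂ = Λ⁻¹ * (Qᵀ * (Q * Λ⁻¹ * Qᵀ)⁻¹ * Q * Λ⁻¹ * Sᵀ * (Q * Λ⁻¹ * Qᵀ)⁻¹ * Q) * Λ⁻¹) :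
    Q * U₁ = (S - Q * Λ⁻¹ * Sᵀ * (Q * Λ⁻¹ * Qᵀ)⁻¹ * Q) * Λ⁻¹ ∧
    Q * U₂ = (Q * Λ⁻¹ * Sᵀ * (Q * Λ⁻¹ * Qᵀ)⁻¹ * Q) * Λ⁻¹ ∧
    Q * (U₁ + U₂) * Λ = S := by
  have hΛu : IsUnit Λ.det := (Matrix.isUnit_iff_isUnit_det Λ).mp hΛ.isUnit
  -- `Qᵀ` is a right inverse of `Q`, so `Q` has independent rows and `Q Λ⁻¹ Qᵀ` stays definite.
  have hinj : Function.Injective Q.vecMul := fun x y hxy => by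
    have h := congrArg (fun v => v ᵥ* Qᵀ) hxy
    simpa [Matrix.vecMul_vecMul, hQ] using h
  have hA : (Q * Λ⁻¹ * Qᵀ).PosDef := by
    simpa [Matrix.conjTranspose_eq_transpose_of_trivial] using
      hΛ.inv.mul_mul_conjTranspose_same hinj
  have hAu : IsUnit (Q * Λ⁻¹ * Qᵀ).det := (Matrix.isUnit_iff_isUnit_det _).mp hA.isUnit
  have hAA := Matrix.mul_nonsing_inv _ hAu
  -- The two formulas use the inverse of `Q Λ⁻¹ Qᵀ` only through this cancellation.
  have cancel : ∀ X : Matrix (Fin n) (Fin N) ℝ,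
      Q * (Λ⁻¹ * (Qᵀ * ((Q * Λ⁻¹ * Qᵀ)⁻¹ * X))) = X := fun X => by
    rw [← Matrix.mul_assoc, ← Matrix.mul_assoc, ← Matrix.mul_assoc, hAA, Matrix.one_mul]
  generalize (Q * Λ⁻¹ * Qᵀ)⁻¹ = B at hU₁ hU₂ cancel ⊢
  have h₁ : Q * U₁ = (S - Q * Λ⁻¹ * Sᵀ * B * Q) * Λ⁻¹ := by
    rw [hU₁]
    simp only [Matrix.mul_sub, Matrix.sub_mul, Matrix.mul_assoc, cancel]
  have h₂ : Q * U₂ = (Q * Λ⁻¹ * Sᵀ * B * Q) * Λ⁻¹ := by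
    rw [hU₂]
    simp only [Matrix.mul_assoc, cancel]
  refine ⟨h₁, h₂, ?_⟩
  rw [Matrix.mul_add, h₁, h₂, ← Matrix.add_mul, sub_add_cancel, Matrix.mul_assoc,
    Matrix.nonsing_inv_mul _ hΛu, Matrix.mul_one]
end

section
/- Let Λ be a positive definite diagonal N×N real matrix and let Q, S : ℝ → ℝ^{n×N} be differentiable matrix-valued curves such that for all t: Q(t) Q(t)ᵀ = Iₙ, Q′(t) = S(t) Λ⁻¹, and S′(t) = B(t) Q(t) for some symmetric n×n matrix B(t). Then for all t, B(t) satisfies (Q Λ⁻¹ Qᵀ) B + B (Q Λ⁻¹ Qᵀ) = −2 S Λ⁻² Sᵀ (all quantities evaluated at t); in particular B(t) is the unique symmetric solution of this equation. -/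
/-!
Differentiating the constraint `Q Qᵀ = 1` once gives `S Λ⁻¹ Qᵀ + Q Λ⁻¹ Sᵀ = 0` for all times;
differentiating again and substituting `Q' = S Λ⁻¹`, `S' = B Q`, `Bᵀ = B` gives the Lyapunov
equation for `B` (`Matrix.hasDerivAt_entries_mul_transpose` is the product rule that is used twice).
Uniqueness: the difference `D` of two symmetric solutions satisfies `P D + D P = 0` with
`P = Q Λ⁻¹ Qᵀ` positive definite. Taking the trace against `D` gives `Tr (D P D) = 0`, which forces
`D = 0` because `D P D` is positive semidefinite.
-/

open Matrix

/-- Product rule for `F Gᵀ`, with derivatives of matrix curves understood entrywise. -/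
lemma Matrix.hasDerivAt_entries_mul_transpose {n N : ℕ} {F G : ℝ → Matrix (Fin n) (Fin N) ℝ}
    {F' G' : Matrix (Fin n) (Fin N) ℝ} {t : ℝ}
    (hF : ∀ i j, HasDerivAt (fun s => F s i j) (F' i j) t)
    (hG : ∀ i j, HasDerivAt (fun s => G s i j) (G' i j) t) (i j : Fin n) :
    HasDerivAt (fun s => (F s * (G s)ᵀ) i j) ((F' * (G t)ᵀ + F t * G'ᵀ) i j) t := by
  simp only [Matrix.add_apply, Matrix.mul_apply, Matrix.transpose_apply, ← Finset.sum_add_distrib]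
  exact HasDerivAt.fun_sum fun k _ => (hF i k).mul (hG j k)

lemma Matrix.hasDerivAt_entries_mul_const {n N : ℕ} {F : ℝ → Matrix (Fin n) (Fin N) ℝ}
    {F' : Matrix (Fin n) (Fin N) ℝ} {t : ℝ} (M : Matrix (Fin N) (Fin N) ℝ)
    (hF : ∀ i j, HasDerivAt (fun s => F s i j) (F' i j) t) (i : Fin n) (j : Fin N) :
    HasDerivAt (fun s => (F s * M) i j) ((F' * M) i j) t := by
  simp only [Matrix.mul_apply]
  exact HasDerivAt.fun_sum fun k _ => (hF i k).mul_const (M k j)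

/-- The homogeneous Lyapunov equation of a positive definite matrix has no nonzero symmetric
solution. -/
lemma Matrix.PosDef.eq_zero_of_lyapunov {n : ℕ} {P D : Matrix (Fin n) (Fin n) ℝ}
    (hP : P.PosDef) (hD : Dᵀ = D) (h : P * D + D * P = 0) : D = 0 := by
  have htr : (Dᴴ * P * D).trace = 0 := by
    have h1 := congrArg (fun M => (D * M).trace) h
    simp only [Matrix.mul_add, Matrix.trace_add, Matrix.mul_zero, Matrix.trace_zero] at h1
    have h2 : (D * (D * P)).trace = (D * (P * D)).trace := by
      rw [Matrix.trace_mul_comm, Matrix.mul_assoc]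
    rw [Matrix.conjTranspose_eq_transpose_of_trivial, hD, Matrix.mul_assoc]
    linarith
  have hzero : Dᴴ * P * D = 0 :=
    (hP.posSemidef.conjTranspose_mul_mul_same D).trace_eq_zero_iff.1 htr
  -- The quadratic form of `P` vanishes on the range of `D`.
  have hDx : ∀ x, D *ᵥ x = 0 := fun x => by
    by_contra hx
    have hpos := hP.dotProduct_mulVec_pos hx
    have h0 : star (D *ᵥ x) ⬝ᵥ (P *ᵥ (D *ᵥ x)) = 0 := by
      rw [Matrix.star_mulVec, ← Matrix.dotProduct_mulVec, Matrix.mulVec_mulVec,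
        Matrix.mulVec_mulVec, hzero]
      simp
    exact hpos.ne' h0
  exact Matrix.ext_of_mulVec_single fun i => by rw [hDx, Matrix.zero_mulVec]

/-- Along a geodesic on the Stiefel manifold (`Q Qᵀ = 1`, `Q′ = S Λ⁻¹`, `S′ = B Q` with `B`
symmetric), the multiplier `B(t)` satisfies
`(Q Λ⁻¹ Qᵀ) B + B (Q Λ⁻¹ Qᵀ) = −2 S Λ⁻² Sᵀ` and is the unique symmetric solution of
this equation. -/
theorem stmt7 (n N : ℕ) (Λ : Matrix (Fin N) (Fin N) ℝ)
    (hΛ : Λ.PosDef) (hΛdiag : Λ.IsDiag)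
    (Q S : ℝ → Matrix (Fin n) (Fin N) ℝ) (B : ℝ → Matrix (Fin n) (Fin n) ℝ)
    (hQst : ∀ t, Q t * (Q t)ᵀ = 1)
    (hBsymm : ∀ t, (B t)ᵀ = B t)
    (hQ' : ∀ t i j, HasDerivAt (fun s => Q s i j) ((S t * Λ⁻¹) i j) t)
    (hS' : ∀ t i j, HasDerivAt (fun s => S s i j) ((B t * Q t) i j) t) :
    ∀ t, ((Q t * Λ⁻¹ * (Q t)ᵀ) * B t + B t * (Q t * Λ⁻¹ * (Q t)ᵀ)
        = (-2 : ℝ) • (S t * Λ⁻¹ * Λ⁻¹ * (S t)ᵀ)) ∧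
      (∀ B' : Matrix (Fin n) (Fin n) ℝ, B'ᵀ = B' →
        (Q t * Λ⁻¹ * (Q t)ᵀ) * B' + B' * (Q t * Λ⁻¹ * (Q t)ᵀ)
          = (-2 : ℝ) • (S t * Λ⁻¹ * Λ⁻¹ * (S t)ᵀ) → B' = B t) := by
  have hΛs : Λ⁻¹ᵀ = Λ⁻¹ := by
    have := hΛ.inv.isHermitian.eq
    rwa [Matrix.conjTranspose_eq_transpose_of_trivial] at this
  have hfirst : ∀ t, S t * Λ⁻¹ * (Q t)ᵀ + Q t * (S t * Λ⁻¹)ᵀ = 0 := fun t => by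
    ext i j
    have h := Matrix.hasDerivAt_entries_mul_transpose (hQ' t) (hQ' t) i j
    simp only [hQst] at h
    exact h.unique (hasDerivAt_const t _)
  have hsecond : ∀ t, B t * Q t * Λ⁻¹ * (Q t)ᵀ + S t * Λ⁻¹ * (S t * Λ⁻¹)ᵀ
      + (S t * Λ⁻¹ * (S t * Λ⁻¹)ᵀ + Q t * (B t * Q t * Λ⁻¹)ᵀ) = 0 := fun t => by
    ext i j
    have hSΛ := Matrix.hasDerivAt_entries_mul_const Λ⁻¹ (hS' t)
    have h := (Matrix.hasDerivAt_entries_mul_transpose hSΛ (hQ' t) i j).add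
      (Matrix.hasDerivAt_entries_mul_transpose (hQ' t) hSΛ i j)
    have hconst : HasDerivAt ((fun s => (S s * Λ⁻¹ * (Q s)ᵀ) i j)
        + fun s => (Q s * (S s * Λ⁻¹)ᵀ) i j) 0 t := by
      have he : ((fun s => (S s * Λ⁻¹ * (Q s)ᵀ) i j)
          + fun s => (Q s * (S s * Λ⁻¹)ᵀ) i j) = fun _ => (0 : ℝ) := by
        funext s
        exact congrFun (congrFun (hfirst s) i) j
      rw [he]
      exact hasDerivAt_const t _
    exact h.unique hconst
  intro t
  have hB : (Q t * Λ⁻¹ * (Q t)ᵀ) * B t + B t * (Q t * Λ⁻¹ * (Q t)ᵀ)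
      = (-2 : ℝ) • (S t * Λ⁻¹ * Λ⁻¹ * (S t)ᵀ) := by
    have h := hsecond t
    simp only [Matrix.transpose_mul, hΛs, hBsymm, ← Matrix.mul_assoc] at h ⊢
    rw [← sub_eq_zero, ← h]
    module
  refine ⟨hB, fun B' hB's hB' => ?_⟩
  have hP : (Q t * Λ⁻¹ * (Q t)ᵀ).PosDef := by
    -- `Q Qᵀ = 1` makes `v ↦ v Q` injective.
    have hinj : Function.Injective fun v => v ᵥ* Q t := fun v w hvw => by
      have := congrArg (fun u => u ᵥ* (Q t)ᵀ) hvw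
      simpa [Matrix.vecMul_vecMul, hQst] using this
    simpa [Matrix.conjTranspose_eq_transpose_of_trivial] using
      hΛ.inv.mul_mul_conjTranspose_same hinj
  refine sub_eq_zero.1 (hP.eq_zero_of_lyapunov (D := B' - B t) ?_ ?_)
  · rw [Matrix.transpose_sub, hB's, hBsymm]
  · rw [Matrix.mul_sub, Matrix.sub_mul, ← sub_eq_zero.2 (hB'.trans hB.symm)]
    abel
end

section
/- Let Λ be a positive definite diagonal N×N real matrix and let Q, S : ℝ → ℝ^{n×N} be differentiable curves and B : ℝ → ℝ^{n×n} a curve of symmetric matrices such that for all t: Q(t) Q(t)ᵀ = Iₙ, Q′(t) = S(t) Λ⁻¹, and S′(t) = B(t) Q(t). Then the spatial momentum m(t) = S(t) Q(t)ᵀ − Q(t) S(t)ᵀ is constant in t (its derivative vanishes identically). -/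
/-!
Differentiating, `(S Qᵀ)′ = B Q Qᵀ + S (S Λ⁻¹)ᵀ = B + S Λ⁻¹ Sᵀ`, because `Q Qᵀ = 1` and `Λ` is
symmetric. Both summands are symmetric, so the skew part `m = S Qᵀ − (S Qᵀ)ᵀ` has zero derivative.
-/

open Matrix

/-- The product rule for `X Yᵀ`, with derivatives taken entrywise. -/
lemma hasDerivAt_mul_transpose_apply {n N : ℕ} {X Y : ℝ → Matrix (Fin n) (Fin N) ℝ}
    {X' Y' : Matrix (Fin n) (Fin N) ℝ} {t : ℝ}
    (hX : ∀ i j, HasDerivAt (fun s => X s i j) (X' i j) t)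
    (hY : ∀ i j, HasDerivAt (fun s => Y s i j) (Y' i j) t) (i j : Fin n) :
    HasDerivAt (fun s => (X s * (Y s)ᵀ) i j) ((X' * (Y t)ᵀ + X t * Y'ᵀ) i j) t := by
  simp only [Matrix.add_apply, Matrix.mul_apply, Matrix.transpose_apply, ← Finset.sum_add_distrib]
  exact HasDerivAt.fun_sum fun k _ => (hX i k).mul (hY j k)

/-- Along a geodesic on the Stiefel manifold (`Q Qᵀ = 1`, `Q′ = S Λ⁻¹`, `S′ = B Q` with `B`
symmetric), the spatial momentum `m = S Qᵀ − Q Sᵀ` is constant: its derivative vanishes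
identically, and `m` takes the same value at all times. -/
theorem stmt8 (n N : ℕ) (Λ : Matrix (Fin N) (Fin N) ℝ)
    (hΛ : Λ.PosDef) (hΛdiag : Λ.IsDiag)
    (Q S : ℝ → Matrix (Fin n) (Fin N) ℝ) (B : ℝ → Matrix (Fin n) (Fin n) ℝ)
    (hQst : ∀ t, Q t * (Q t)ᵀ = 1)
    (hBsymm : ∀ t, (B t)ᵀ = B t)
    (hQ' : ∀ t i j, HasDerivAt (fun s => Q s i j) ((S t * Λ⁻¹) i j) t)
    (hS' : ∀ t i j, HasDerivAt (fun s => S s i j) ((B t * Q t) i j) t) :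
    (∀ t i j, HasDerivAt (fun s => (S s * (Q s)ᵀ - Q s * (S s)ᵀ) i j) 0 t) ∧
    (∀ t₁ t₂, S t₁ * (Q t₁)ᵀ - Q t₁ * (S t₁)ᵀ = S t₂ * (Q t₂)ᵀ - Q t₂ * (S t₂)ᵀ) := by
  have hΛinv : (Λ⁻¹)ᵀ = Λ⁻¹ := by
    rw [Matrix.transpose_nonsing_inv, hΛdiag.isSymm.eq]
  have hderiv : ∀ t i j,
      HasDerivAt (fun s => (S s * (Q s)ᵀ - Q s * (S s)ᵀ) i j) 0 t := by
    intro t i j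
    have h := (hasDerivAt_mul_transpose_apply (hS' t) (hQ' t) i j).sub
      (hasDerivAt_mul_transpose_apply (hQ' t) (hS' t) i j)
    have hcancel : (B t * Q t * (Q t)ᵀ + S t * (S t * Λ⁻¹)ᵀ) =
        (S t * Λ⁻¹ * (S t)ᵀ + Q t * (B t * Q t)ᵀ) := by
      rw [Matrix.transpose_mul, Matrix.transpose_mul, hΛinv, hBsymm, Matrix.mul_assoc (B t),
        ← Matrix.mul_assoc (Q t), hQst, Matrix.mul_one, Matrix.one_mul, Matrix.mul_assoc,
        add_comm]
    rw [hcancel, sub_self] at h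
    exact h
  refine ⟨hderiv, fun t₁ t₂ => ?_⟩
  ext i j
  exact is_const_of_deriv_eq_zero (fun t => (hderiv t i j).differentiableAt)
    (fun t => (hderiv t i j).deriv) t₁ t₂
end

section
/- Let Λ be a positive definite diagonal N×N real matrix, and let Q_{k−1}, Q_k, Q_{k+1} be real n×N matrices in V(n,N) (so Q_j Q_jᵀ = Iₙ) satisfying the discrete extremal equation Q_{k+1} Λ + Q_{k−1} Λ = B_k Q_k for some symmetric n×n matrix B_k. Set U_k = Q_{k−1}ᵀ Q_k, M_k = Q_{k−1}ᵀ Q_k Λ − Λ Q_kᵀ Q_{k−1}, M_{k+1} = Q_kᵀ Q_{k+1} Λ − Λ Q_{k+1}ᵀ Q_k, and A_k = U_kᵀ Λ (I_N − U_kᵀ U_k) − (I_N − U_kᵀ U_k) Λ U_k. Then M_{k+1} = U_kᵀ M_k U_k − A_k. -/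
/-!
The extremal equation and its transpose (with `Λ` and `B_k` symmetric) eliminate `Q_{k+1}` from
`M_{k+1}`: the two `Q_kᵀ B_k Q_k` terms cancel and `M_{k+1} = Λ U_k − U_kᵀ Λ`. On the other
side `M_k = U_k Λ − Λ U_kᵀ`, so the terms of `U_kᵀ M_k U_k` cancel the cubic terms of `A_k`, which
leaves the same expression.
-/

open Matrix

/-- Moser–Veselov discrete body momentum evolution: if `Q_{k+1} Λ + Q_{k−1} Λ = B_k Q_k`
with `B_k` symmetric and all `Q_j` on the Stiefel manifold, then with `U_k = Q_{k−1}ᵀ Q_k`,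
`M_k = Q_{k−1}ᵀ Q_k Λ − Λ Q_kᵀ Q_{k−1}`, `M_{k+1} = Q_kᵀ Q_{k+1} Λ − Λ Q_{k+1}ᵀ Q_k` and
`A_k = U_kᵀ Λ (1 − U_kᵀ U_k) − (1 − U_kᵀ U_k) Λ U_k`, one has
`M_{k+1} = U_kᵀ M_k U_k − A_k`. -/
theorem stmt10 (n N : ℕ) (Λ : Matrix (Fin N) (Fin N) ℝ)
    (hΛ : Λ.PosDef) (hΛdiag : Λ.IsDiag)
    (Qm Qk Qp : Matrix (Fin n) (Fin N) ℝ) (Bk : Matrix (Fin n) (Fin n) ℝ)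
    (hQm : Qm * Qmᵀ = 1) (hQk : Qk * Qkᵀ = 1) (hQp : Qp * Qpᵀ = 1)
    (hBk : Bkᵀ = Bk) (hext : Qp * Λ + Qm * Λ = Bk * Qk)
    (Uk Mk Mk1 Ak : Matrix (Fin N) (Fin N) ℝ)
    (hUk : Uk = Qmᵀ * Qk)
    (hMk : Mk = Qmᵀ * Qk * Λ - Λ * (Qkᵀ * Qm))
    (hMk1 : Mk1 = Qkᵀ * Qp * Λ - Λ * (Qpᵀ * Qk))
    (hAk : Ak = Ukᵀ * Λ * (1 - Ukᵀ * Uk) - (1 - Ukᵀ * Uk) * Λ * Uk) :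
    Mk1 = Ukᵀ * Mk * Uk - Ak := by
  have hΛT : Λᵀ = Λ := hΛdiag.isSymm
  have h1 : Qp * Λ = Bk * Qk - Qm * Λ := eq_sub_of_add_eq hext
  have h2 : Λ * Qpᵀ = Qkᵀ * Bk - Λ * Qmᵀ := by
    have h := congrArg Matrix.transpose h1
    simpa only [transpose_mul, transpose_sub, hΛT, hBk] using h
  have hUT : Ukᵀ = Qkᵀ * Qm := by rw [hUk, transpose_mul, transpose_transpose]
  -- `Q_{k+1}` eliminated: the momentum depends on `U_k` and `Λ` alone.
  have hM1 : Mk1 = Λ * Uk - Ukᵀ * Λ := by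
    rw [hMk1, hUT, hUk, Matrix.mul_assoc Qkᵀ Qp Λ, h1, ← Matrix.mul_assoc Λ Qpᵀ Qk, h2]
    simp only [Matrix.mul_sub, Matrix.sub_mul, Matrix.mul_assoc]
    abel
  rw [hM1, hMk, hAk, ← hUT, ← hUk]
  noncomm_ring
end

section
/- Let Λ be an N×N real matrix and let Q_{k−1}, Q_k be real n×N matrices with Q_k Q_kᵀ = Iₙ. Set M_k = Q_{k−1}ᵀ Q_k Λ − Λ Q_kᵀ Q_{k−1} and C_k(λ) = Λ − λ Q_kᵀ Q_{k−1}. Then for every real λ, the matrix polynomial L_k(λ) = Λ² + λ M_k − λ² Q_{k−1}ᵀ Q_{k−1} factors as L_k(λ) = C_k(−λ)ᵀ C_k(λ), i.e. (Λ + λ Q_{k−1}ᵀ Q_k)(Λ − λ Q_kᵀ Q_{k−1}) = Λ² + λ M_k − λ² Q_{k−1}ᵀ Q_{k−1}. -/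
open Matrix

/-- Factorization of the Moser–Veselov matrix polynomial: for `Q_k Q_kᵀ = 1` and
`M_k = Q_{k−1}ᵀ Q_k Λ − Λ Q_kᵀ Q_{k−1}`, for every real `λ`,
`(Λ + λ Q_{k−1}ᵀ Q_k)(Λ − λ Q_kᵀ Q_{k−1}) = Λ² + λ M_k − λ² Q_{k−1}ᵀ Q_{k−1}`,
i.e. `L_k(λ) = C_k(−λ)ᵀ C_k(λ)` with `C_k(λ) = Λ − λ Q_kᵀ Q_{k−1}`. -/
theorem stmt12 (n N : ℕ) (Λ : Matrix (Fin N) (Fin N) ℝ)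
    (Qm Qk : Matrix (Fin n) (Fin N) ℝ)
    (hQk : Qk * Qkᵀ = 1)
    (Mk : Matrix (Fin N) (Fin N) ℝ)
    (hMk : Mk = Qmᵀ * Qk * Λ - Λ * (Qkᵀ * Qm)) :
    ∀ l : ℝ, (Λ + l • (Qmᵀ * Qk)) * (Λ - l • (Qkᵀ * Qm))
      = Λ * Λ + l • Mk - (l ^ 2) • (Qmᵀ * Qm) := by
  intro l
  -- The orthonormality of the rows of `Qk` collapses the only quartic term.
  have h : Qmᵀ * Qk * (Qkᵀ * Qm) = Qmᵀ * Qm := by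
    rw [Matrix.mul_assoc, ← Matrix.mul_assoc Qk, hQk, Matrix.one_mul]
  rw [hMk, Matrix.add_mul, Matrix.mul_sub, Matrix.mul_sub]
  simp only [Matrix.smul_mul, Matrix.mul_smul, h, smul_sub, smul_smul, pow_two]
  abel
end

section
/- Let Λ be an N×N real matrix, let U : ℝ → so(N) be a continuous curve of skew-symmetric N×N matrices, and let Q, P : ℝ → ℝ^{n×N} be differentiable curves satisfying for all t: Q Qᵀ = Iₙ, Q′ = Q U, and P′ = P U − Q A, where A = Qᵀ Q U Λ U − U Λ U Qᵀ Q. Then P(t) Q(t)ᵀ is constant in t; consequently k = P Qᵀ + Q Pᵀ and the spatial momentum m = P Qᵀ − Q Pᵀ are conserved along the flow. -/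
open Matrix

/-! Differentiating, `(P Qᵀ)′ = (P U − Q A) Qᵀ + P (Q U)ᵀ`. Skew-symmetry of `U` cancels the two
terms in `P U Qᵀ`, which leaves `−Q A Qᵀ`; and `Q Qᵀ = 1` turns both terms of the commutator
`Q A Qᵀ` into `Q U Λ U Qᵀ`, so that it vanishes (`deriv_terms_cancel`). Hence `P Qᵀ` is constant;
`k` and `m` are `P Qᵀ` plus and minus its transpose. -/

/-- Product rule for `A Bᵀ`, with derivatives taken entrywise. -/
lemma hasDerivAt_mul_transpose_apply_s14 {l m : Type*} {n : ℕ}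
    {A : ℝ → Matrix l (Fin n) ℝ} {B : ℝ → Matrix m (Fin n) ℝ}
    {A' : Matrix l (Fin n) ℝ} {B' : Matrix m (Fin n) ℝ} {t : ℝ}
    (hA : ∀ i j, HasDerivAt (fun s => A s i j) (A' i j) t)
    (hB : ∀ i j, HasDerivAt (fun s => B s i j) (B' i j) t) (i : l) (j : m) :
    HasDerivAt (fun s => (A s * (B s)ᵀ) i j) ((A' * (B t)ᵀ + A t * B'ᵀ) i j) t := by
  simp only [Matrix.mul_apply, Matrix.add_apply, Matrix.transpose_apply, ← Finset.sum_add_distrib]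
  exact HasDerivAt.fun_sum fun k _ => (hA i k).fun_mul (hB j k)

/-- The derivative of `P Qᵀ` given by the product rule along the extremal flow is zero. -/
lemma deriv_terms_cancel {n N : ℕ} (Λ U : Matrix (Fin N) (Fin N) ℝ)
    (Q P : Matrix (Fin n) (Fin N) ℝ) (hU : Uᵀ = -U) (hQ : Q * Qᵀ = 1) :
    (P * U - Q * (Qᵀ * Q * U * Λ * U - U * Λ * U * (Qᵀ * Q))) * Qᵀ + P * (Q * U)ᵀ = 0 := by
  have h1 : Q * (Qᵀ * Q * U * Λ * U) * Qᵀ = Q * U * Λ * U * Qᵀ := by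
    simp only [← Matrix.mul_assoc, hQ, Matrix.one_mul]
  have h2 : Q * (U * Λ * U * (Qᵀ * Q)) * Qᵀ = Q * U * Λ * U * Qᵀ := by
    simp only [Matrix.mul_assoc, hQ, Matrix.mul_one]
  rw [Matrix.sub_mul, Matrix.mul_sub, Matrix.sub_mul, h1, h2, Matrix.transpose_mul, hU,
    Matrix.neg_mul, Matrix.mul_neg, Matrix.mul_assoc]
  abel

/-- Along the extremal flow `Q′ = Q U`, `P′ = P U − Q A` with
`A = Qᵀ Q U Λ U − U Λ U Qᵀ Q` on the Stiefel manifold, the quantity `P Qᵀ` is constant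
in `t`; consequently `k = P Qᵀ + Q Pᵀ` and the spatial momentum `m = P Qᵀ − Q Pᵀ` are
conserved. -/
theorem stmt14 (n N : ℕ) (Λ : Matrix (Fin N) (Fin N) ℝ)
    (U : ℝ → Matrix (Fin N) (Fin N) ℝ) (Q P : ℝ → Matrix (Fin n) (Fin N) ℝ)
    (hUcont : ∀ i j, Continuous fun t => U t i j)
    (hUskew : ∀ t, (U t)ᵀ = -(U t))
    (hQst : ∀ t, Q t * (Q t)ᵀ = 1)
    (hQ' : ∀ t i j, HasDerivAt (fun s => Q s i j) ((Q t * U t) i j) t)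
    (hP' : ∀ t i j, HasDerivAt (fun s => P s i j)
      ((P t * U t - Q t * ((Q t)ᵀ * Q t * U t * Λ * U t
        - U t * Λ * U t * ((Q t)ᵀ * Q t))) i j) t) :
    (∀ t₁ t₂, P t₁ * (Q t₁)ᵀ = P t₂ * (Q t₂)ᵀ) ∧
    (∀ t₁ t₂, P t₁ * (Q t₁)ᵀ + Q t₁ * (P t₁)ᵀ = P t₂ * (Q t₂)ᵀ + Q t₂ * (P t₂)ᵀ) ∧
    (∀ t₁ t₂, P t₁ * (Q t₁)ᵀ - Q t₁ * (P t₁)ᵀ = P t₂ * (Q t₂)ᵀ - Q t₂ * (P t₂)ᵀ) := by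
  have key : ∀ t₁ t₂, P t₁ * (Q t₁)ᵀ = P t₂ * (Q t₂)ᵀ := by
    intro t₁ t₂
    ext i j
    have hd : ∀ t, HasDerivAt (fun s => (P s * (Q s)ᵀ) i j) 0 t := fun t => by
      have h := hasDerivAt_mul_transpose_apply_s14 (hP' t) (hQ' t) i j
      rwa [deriv_terms_cancel Λ (U t) (Q t) (P t) (hUskew t) (hQst t)] at h
    exact is_const_of_deriv_eq_zero (fun t => (hd t).differentiableAt) (fun t => (hd t).deriv) t₁ t₂
  have keyT : ∀ t₁ t₂, Q t₁ * (P t₁)ᵀ = Q t₂ * (P t₂)ᵀ := fun t₁ t₂ => by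
    simpa [Matrix.transpose_mul] using congrArg Matrix.transpose (key t₁ t₂)
  exact ⟨key, fun t₁ t₂ => by rw [key t₁ t₂, keyT t₁ t₂],
    fun t₁ t₂ => by rw [key t₁ t₂, keyT t₁ t₂]⟩
end

section
/- Let Q be a real n×N matrix with Q Qᵀ = Iₙ, let P be any real n×N matrix, and let U₁, V₁ be skew-symmetric N×N real matrices. Suppose that for all skew-symmetric N×N matrices U₂, V₂: Tr((P U₂ + Q V₂)ᵀ Q U₁) − Tr((P U₁ + Q V₁)ᵀ Q U₂) = 0. Then Q U₁ = 0 and P U₁ + Q V₁ = 0. (This is the nondegeneracy of the restriction of the canonical symplectic form ω((A₁,A₂),(B₁,B₂)) = ⟨A₁,B₂⟩ − ⟨A₂,B₁⟩ of ℝ^{nN} × ℝ^{nN} to the tangent spaces of the submanifolds W^k_{n,N}, making W^k_{n,N} a symplectic submanifold.) -/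
/-!
Under the trace pairing, the skew-symmetric matrices have the symmetric ones as orthogonal complement
(`isSymm_of_trace_mul_skew`), so varying `V₂` and `U₂` separately turns the hypothesis into two
symmetry conditions. With `U₂ = 0`: `Qᵀ Q U₁` is symmetric, so the projection `Π = Qᵀ Q` anticommutes
with `U₁`, which forces `Π U₁ = 0` and hence `Q U₁ = 0`. With `V₂ = 0`: writing
`B = P U₁ + Q V₁`, the matrix `Bᵀ Q` is symmetric, so `B = Q Bᵀ Q` and `B Qᵀ = Q Bᵀ` is symmetric.
But `U₁ Qᵀ = 0` gives `B Qᵀ = Q V₁ Qᵀ`, which is skew; so `Q Bᵀ = 0` and `B = 0`.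
-/

open Matrix

lemma eq_zero_of_eq_neg_self {m k : ℕ} {A : Matrix (Fin m) (Fin k) ℝ} (h : A = -A) : A = 0 := by
  ext i j
  have := congrFun (congrFun h i) j
  simp only [Matrix.neg_apply, Matrix.zero_apply] at this ⊢
  linarith

/-- A real matrix orthogonal to all skew-symmetric matrices is symmetric: test against `Mᵀ - M`. -/
lemma isSymm_of_trace_mul_skew {N : ℕ} (M : Matrix (Fin N) (Fin N) ℝ)
    (h : ∀ X : Matrix (Fin N) (Fin N) ℝ, Xᵀ = -X → (M * X).trace = 0) : Mᵀ = M := by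
  have hX : (Mᵀ - M)ᵀ = -(Mᵀ - M) := by simp
  have h1 := h _ hX
  have h2 : (Mᵀ * (Mᵀ - M)).trace = 0 := by
    rw [← trace_transpose, transpose_mul, hX, transpose_transpose, neg_mul, trace_neg,
      trace_mul_comm, h1, neg_zero]
  have h3 : ((Mᵀ - M)ᴴ * (Mᵀ - M)).trace = 0 := by
    rw [conjTranspose_eq_transpose_of_trivial, hX, neg_mul, sub_mul, trace_neg, trace_sub, h1, h2]
    simp
  exact sub_eq_zero.mp (trace_conjTranspose_mul_self_eq_zero_iff.mp h3)

/-- A matrix anticommuting with an idempotent is annihilated by it. -/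
lemma idem_mul_eq_zero_of_anticomm {N : ℕ} {E U : Matrix (Fin N) (Fin N) ℝ}
    (hE : E * E = E) (h : E * U = -(U * E)) : E * U = 0 := by
  have h1 : E * U = -(E * U * E) := by
    calc E * U = E * (E * U) := by rw [← Matrix.mul_assoc, hE]
      _ = -(E * U * E) := by nth_rewrite 1 [h]; rw [Matrix.mul_neg, Matrix.mul_assoc]
  have h2 : E * U * E = -(U * E) := by
    rw [h, Matrix.neg_mul, Matrix.mul_assoc, hE]
  have h3 : E * U = -(E * U) := by
    rw [h2, neg_neg] at h1
    rw [← h1] at h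
    exact h
  exact eq_zero_of_eq_neg_self h3

/-- Nondegeneracy of the restricted symplectic form on `W^k_{n,N}`: if for all
skew-symmetric `U₂, V₂` one has
`⟨Q U₁, P U₂ + Q V₂⟩ − ⟨Q U₂, P U₁ + Q V₁⟩ = 0` (with `⟨A,B⟩ = Tr(Aᵀ B)`),
then `Q U₁ = 0` and `P U₁ + Q V₁ = 0`. -/
theorem stmt16 (n N : ℕ) (Q P : Matrix (Fin n) (Fin N) ℝ)
    (hQ : Q * Qᵀ = 1)
    (U₁ V₁ : Matrix (Fin N) (Fin N) ℝ) (hU₁ : U₁ᵀ = -U₁) (hV₁ : V₁ᵀ = -V₁)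
    (h : ∀ U₂ V₂ : Matrix (Fin N) (Fin N) ℝ, U₂ᵀ = -U₂ → V₂ᵀ = -V₂ →
      ((P * U₂ + Q * V₂)ᵀ * (Q * U₁)).trace
        - ((P * U₁ + Q * V₁)ᵀ * (Q * U₂)).trace = 0) :
    Q * U₁ = 0 ∧ P * U₁ + Q * V₁ = 0 := by
  have hQU : Q * U₁ = 0 := by
    have hs : (Qᵀ * Q * U₁)ᵀ = Qᵀ * Q * U₁ := by
      apply isSymm_of_trace_mul_skew
      intro X hX
      have := h 0 X (by simp) hX
      simp only [Matrix.mul_zero, zero_add, trace_zero, sub_zero, transpose_mul, hX,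
        Matrix.neg_mul, trace_neg, neg_eq_zero] at this
      rw [trace_mul_comm, ← this]
      simp only [Matrix.mul_assoc]
    have hE : Qᵀ * Q * (Qᵀ * Q) = Qᵀ * Q := by
      rw [Matrix.mul_assoc, ← Matrix.mul_assoc Q, hQ, Matrix.one_mul]
    have hz : Qᵀ * Q * U₁ = 0 := by
      apply idem_mul_eq_zero_of_anticomm hE
      rw [← hs]
      simp only [transpose_mul, transpose_transpose, hU₁, Matrix.neg_mul]
    calc Q * U₁ = Q * Qᵀ * (Q * U₁) := by rw [hQ, Matrix.one_mul]
      _ = Q * (Qᵀ * Q * U₁) := by simp only [Matrix.mul_assoc]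
      _ = 0 := by rw [hz, Matrix.mul_zero]
  refine ⟨hQU, ?_⟩
  have hUQ : U₁ * Qᵀ = 0 := by
    have := congrArg transpose hQU
    simpa [transpose_mul, hU₁] using this
  have hskew : ((P * U₁ + Q * V₁) * Qᵀ)ᵀ = -((P * U₁ + Q * V₁) * Qᵀ) := by
    rw [Matrix.add_mul, Matrix.mul_assoc P, hUQ, Matrix.mul_zero, zero_add]
    simp only [transpose_mul, transpose_transpose, hV₁, Matrix.neg_mul, Matrix.mul_neg,
      Matrix.mul_assoc]
  generalize P * U₁ + Q * V₁ = B at h hskew ⊢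
  have hs : Qᵀ * B = Bᵀ * Q := by
    have : (Bᵀ * Q)ᵀ = Bᵀ * Q := by
      apply isSymm_of_trace_mul_skew
      intro X hX
      have := h X 0 hX (by simp)
      rw [hQU, Matrix.mul_zero, trace_zero, zero_sub, neg_eq_zero] at this
      rw [Matrix.mul_assoc, this]
    simpa [transpose_mul] using this
  have hB : B = Q * Bᵀ * Q := by
    rw [Matrix.mul_assoc, ← hs, ← Matrix.mul_assoc, hQ, Matrix.one_mul]
  have hsym : B * Qᵀ = Q * Bᵀ := by
    calc B * Qᵀ = Q * Bᵀ * Q * Qᵀ := by rw [← hB]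
      _ = Q * Bᵀ := by rw [Matrix.mul_assoc, hQ, Matrix.mul_one]
  have hz : Q * Bᵀ = 0 := by
    rw [transpose_mul, transpose_transpose, hsym] at hskew
    exact eq_zero_of_eq_neg_self hskew
  rw [hB, hz, Matrix.zero_mul]
end

section
/- Let Q be a real n×N matrix with Q Qᵀ = Iₙ, let P be any real n×N matrix, set k = P Qᵀ + Q Pᵀ and P₀ = P − ½ k Q. Then: (i) P₀ Qᵀ + Q P₀ᵀ = 0, so (Q,P₀) ∈ W⁰_{n,N}; (ii) the spatial momentum is unchanged: P₀ Qᵀ − Q P₀ᵀ = P Qᵀ − Q Pᵀ; and (iii) the body momentum is unchanged: Qᵀ P₀ − P₀ᵀ Q = Qᵀ P − Pᵀ Q. -/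
open Matrix

/-- The map `Ξ : (Q,P) ↦ (Q, P₀)` with `P₀ = P − ½ k Q`, `k = P Qᵀ + Q Pᵀ`, sends
`W^k_{n,N}` to `W⁰_{n,N}` and leaves the spatial and body momenta unchanged:
(i) `P₀ Qᵀ + Q P₀ᵀ = 0`; (ii) `P₀ Qᵀ − Q P₀ᵀ = P Qᵀ − Q Pᵀ`;
(iii) `Qᵀ P₀ − P₀ᵀ Q = Qᵀ P − Pᵀ Q`. -/
theorem stmt17 (n N : ℕ) (Q P : Matrix (Fin n) (Fin N) ℝ)
    (hQ : Q * Qᵀ = 1)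
    (k : Matrix (Fin n) (Fin n) ℝ) (hk : k = P * Qᵀ + Q * Pᵀ)
    (P₀ : Matrix (Fin n) (Fin N) ℝ) (hP₀ : P₀ = P - (1 / 2 : ℝ) • (k * Q)) :
    P₀ * Qᵀ + Q * P₀ᵀ = 0 ∧
    P₀ * Qᵀ - Q * P₀ᵀ = P * Qᵀ - Q * Pᵀ ∧
    Qᵀ * P₀ - P₀ᵀ * Q = Qᵀ * P - Pᵀ * Q := by
  -- `k` is symmetric, so the correction `½ k Q` contributes only the symmetric terms `½ k`
  -- (spatially, using `Q Qᵀ = 1`) and `½ Qᵀ k Q` (in the body), which cancel in the momenta.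
  have hkt : kᵀ = k := by
    rw [hk, transpose_add, transpose_mul, transpose_mul, transpose_transpose,
      transpose_transpose, add_comm]
  have h1 : P₀ * Qᵀ = P * Qᵀ - (1 / 2 : ℝ) • k := by
    rw [hP₀, Matrix.sub_mul, Matrix.smul_mul, Matrix.mul_assoc, hQ, Matrix.mul_one]
  have ht : P₀ᵀ = Pᵀ - (1 / 2 : ℝ) • (Qᵀ * k) := by
    rw [hP₀, transpose_sub, transpose_smul, transpose_mul, hkt]
  have h2 : Q * P₀ᵀ = Q * Pᵀ - (1 / 2 : ℝ) • k := by
    rw [ht, Matrix.mul_sub, Matrix.mul_smul, ← Matrix.mul_assoc, hQ, Matrix.one_mul]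
  refine ⟨?_, ?_, ?_⟩
  · rw [h1, h2, hk]
    module
  · rw [h1, h2]
    abel
  · rw [ht, hP₀, Matrix.mul_sub, Matrix.sub_mul, Matrix.mul_smul, Matrix.smul_mul,
      Matrix.mul_assoc]
    abel
end

section
/- Let Q be a real n×N matrix with Q Qᵀ = Iₙ and let P₀ be a real n×N matrix with P₀ Qᵀ + Q P₀ᵀ = 0. Define M̄ = −½ Qᵀ (P₀ Qᵀ − Q P₀ᵀ) Q + Qᵀ P₀ − P₀ᵀ Q. Then M̄ is skew-symmetric and Q M̄ = P₀. (This underlies the symplectomorphism Φ : W⁰_{n,N} → T*V(n,N), (Q,P₀) ↦ (Q, Q M̄).) -/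
open Matrix

/-- For `(Q, P₀) ∈ W⁰_{n,N}` (i.e. `Q Qᵀ = 1` and `P₀ Qᵀ + Q P₀ᵀ = 0`), the matrix
`M̄ = −½ Qᵀ (P₀ Qᵀ − Q P₀ᵀ) Q + Qᵀ P₀ − P₀ᵀ Q` is skew-symmetric and satisfies
`Q M̄ = P₀` (the map underlying the symplectomorphism `W⁰_{n,N} → T*V(n,N)`). -/
theorem stmt19 (n N : ℕ) (Q P₀ : Matrix (Fin n) (Fin N) ℝ)
    (hQ : Q * Qᵀ = 1) (hP₀ : P₀ * Qᵀ + Q * P₀ᵀ = 0)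
    (Mbar : Matrix (Fin N) (Fin N) ℝ)
    (hMbar : Mbar = -(1 / 2 : ℝ) • (Qᵀ * (P₀ * Qᵀ - Q * P₀ᵀ) * Q)
      + (Qᵀ * P₀ - P₀ᵀ * Q)) :
    Mbarᵀ = -Mbar ∧ Q * Mbar = P₀ := by
  subst hMbar
  constructor
  · simp only [transpose_add, transpose_sub, transpose_smul, transpose_mul, transpose_transpose,
      Matrix.mul_sub, Matrix.sub_mul, Matrix.mul_assoc]
    module
  · have hskew : Q * P₀ᵀ = -(P₀ * Qᵀ) := eq_neg_of_add_eq_zero_right hP₀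
    have cancel : ∀ X : Matrix (Fin n) (Fin N) ℝ, Q * (Qᵀ * X) = X := fun X => by
      rw [← Matrix.mul_assoc, hQ, Matrix.one_mul]
    -- With `A = P₀ Qᵀ` and `Q P₀ᵀ = -A`, the product is `-½ (2 A) Q + P₀ + A Q`.
    rw [Matrix.mul_add, Matrix.mul_smul, Matrix.mul_assoc Qᵀ, Matrix.mul_sub Q (Qᵀ * P₀), cancel, cancel,
      ← Matrix.mul_assoc Q P₀ᵀ, hskew, sub_neg_eq_add, Matrix.add_mul, Matrix.neg_mul]
    module
end
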